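/- The thermodynamic limit of the Curie-Weiss free energy exists and equals both the infimum over N and the variational formula: lim_{N→∞} N^{-1} log Z_N(β,h) = inf_N N^{-1} log Z_N(β,h) = sup_{M∈ℝ} (log 2 + log cosh(β(h+M)) − (β/2) M²). -/

import Mathlib

open Finset Real

/-- The value `±1` of an Ising spin encoded by a Boolean. -/
def spin (b : Bool) : ℝ := if b then 1 else -1

/-- Magnetization of a configuration of `N` Ising spins. -/
noncomputable def cwMag (N : ℕ) (σ : Fin N → Bool) : ℝ := (∑ i, spin (σ i)) / N

/-- Curie-Weiss partition function `Z_N(β,h) = ∑_σ exp((β/2) N m(σ)² + β h ∑ᵢ σᵢ)`. -/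
noncomputable def cwZ (N : ℕ) (β h : ℝ) : ℝ :=
  ∑ σ : Fin N → Bool,
    Real.exp (β / 2 * N * cwMag N σ ^ 2 + β * h * ∑ i, spin (σ i))

open Filter

lemma cw_sum_exp (N : ℕ) (c : ℝ) :
    ∑ σ : Fin N → Bool, Real.exp (c * ∑ i, spin (σ i)) = (2 * Real.cosh c) ^ N := by
  have h1 : (2 * Real.cosh c) = ∑ b : Bool, Real.exp (c * spin b) := by
    simp [spin, Real.cosh_eq]; ring
  rw [h1, Fintype.sum_pow]
  refine Finset.sum_congr rfl fun σ _ => ?_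
  rw [Finset.mul_sum, Real.exp_sum]

lemma cw_exp_F (N : ℕ) (β h M : ℝ) :
    Real.exp (N * (Real.log 2 + Real.log (Real.cosh (β * (h + M))) - β / 2 * M ^ 2))
      = ∑ σ : Fin N → Bool,
        Real.exp (-(N * (β / 2 * M ^ 2)) + β * (h + M) * ∑ i, spin (σ i)) := by
  have hc := Real.cosh_pos (β * (h + M))
  simp_rw [Real.exp_add]
  rw [← Finset.mul_sum, cw_sum_exp, ← Real.log_mul two_ne_zero hc.ne', mul_sub, sub_eq_neg_add,
    Real.exp_add, Real.exp_nat_mul _ N, Real.exp_log (by positivity)]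

lemma cw_Z_pos (N : ℕ) (β h : ℝ) : 0 < cwZ N β h :=
  Finset.sum_pos (fun _ _ => Real.exp_pos _) Finset.univ_nonempty

lemma cw_sum_eq (N : ℕ) (hN : 1 ≤ N) (σ : Fin N → Bool) :
    ∑ i, spin (σ i) = N * cwMag N σ := by
  have : (N : ℝ) ≠ 0 := by positivity
  unfold cwMag; field_simp

lemma cw_lower (N : ℕ) (hN : 1 ≤ N) (β h M : ℝ) (hβ : 0 ≤ β) :
    Real.log 2 + Real.log (Real.cosh (β * (h + M))) - β / 2 * M ^ 2
      ≤ Real.log (cwZ N β h) / N := by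
  have hN' : (0 : ℝ) < N := by positivity
  rw [le_div_iff₀ hN', Real.le_log_iff_exp_le (cw_Z_pos N β h), mul_comm, cw_exp_F]
  refine Finset.sum_le_sum fun σ _ => Real.exp_le_exp.2 ?_
  rw [cw_sum_eq N hN σ]
  nlinarith [mul_nonneg (mul_nonneg hβ hN'.le) (sq_nonneg (cwMag N σ - M))]

lemma cw_mag_mem (N : ℕ) (σ : Fin N → Bool) :
    ∃ k ∈ Finset.range (N + 1), cwMag N σ = (2 * (k : ℝ) - N) / N := by
  refine ⟨(Finset.univ.filter fun i => σ i = true).card, ?_, ?_⟩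
  · rw [Finset.mem_range, Nat.lt_succ_iff]
    simpa using Finset.card_filter_le (Finset.univ : Finset (Fin N)) fun i => σ i = true
  · unfold cwMag
    congr 1
    have : ∀ b, spin b = 2 * (if b = true then (1 : ℝ) else 0) - 1 := by
      intro b; cases b <;> norm_num [spin]
    simp only [this, Finset.sum_sub_distrib, ← Finset.mul_sum, Finset.sum_boole]
    simp

lemma cw_upper (N : ℕ) (hN : 1 ≤ N) (β h S : ℝ)
    (hS : ∀ M : ℝ, Real.log 2 + Real.log (Real.cosh (β * (h + M))) - β / 2 * M ^ 2 ≤ S) :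
    Real.log (cwZ N β h) / N ≤ Real.log (N + 1) / N + S := by
  have hN' : (0 : ℝ) < N := by positivity
  have key : cwZ N β h ≤ (N + 1) * Real.exp (N * S) := by
    calc cwZ N β h ≤ ∑ σ : Fin N → Bool, ∑ k ∈ Finset.range (N + 1),
          Real.exp (-(N * (β / 2 * ((2 * (k : ℝ) - N) / N) ^ 2))
            + β * (h + (2 * (k : ℝ) - N) / N) * ∑ i, spin (σ i)) := by
          refine Finset.sum_le_sum fun σ _ => ?_
          obtain ⟨k, hk, hm⟩ := cw_mag_mem N σ
          refine le_trans (le_of_eq ?_) (Finset.single_le_sum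
            (fun k _ => (Real.exp_pos _).le) hk)
          rw [← hm, cw_sum_eq N hN σ]
          congr 1; ring
      _ = ∑ k ∈ Finset.range (N + 1), Real.exp (N * (Real.log 2 + Real.log (Real.cosh
            (β * (h + (2 * (k : ℝ) - N) / N))) - β / 2 * ((2 * (k : ℝ) - N) / N) ^ 2)) := by
          rw [Finset.sum_comm]
          exact Finset.sum_congr rfl fun k _ => (cw_exp_F N β h _).symm
      _ ≤ ∑ k ∈ Finset.range (N + 1), Real.exp (N * S) :=
          Finset.sum_le_sum fun k _ => Real.exp_le_exp.2
            (mul_le_mul_of_nonneg_left (hS _) hN'.le)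
      _ = _ := by simp
  have := Real.log_le_log (cw_Z_pos N β h) key
  rw [Real.log_mul (by positivity) (Real.exp_pos _).ne', Real.log_exp] at this
  rw [div_add' _ _ _ hN'.ne']
  gcongr
  linarith

lemma cw_log_tendsto :
    Filter.Tendsto (fun N : ℕ => Real.log ((N : ℝ) + 1) / N) Filter.atTop (nhds 0) := by
  have h1 : Filter.Tendsto (fun x : ℝ => Real.log x / (x - 1)) Filter.atTop (nhds 0) := by
    simpa [sub_eq_add_neg] using
      Real.tendsto_pow_log_div_mul_add_atTop 1 (-1) 1 one_ne_zero
  have h2 : Filter.Tendsto (fun N : ℕ => (N : ℝ) + 1) Filter.atTop Filter.atTop :=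
    Filter.tendsto_atTop_add_const_right _ _ tendsto_natCast_atTop_atTop
  simpa [Function.comp_def] using h1.comp h2

/-- the thermodynamic limit of the Curie-Weiss free energy exists and equals
both the infimum over `N` and the variational formula
`sup_M (log 2 + log cosh(β(h+M)) − (β/2)M²)`. -/
theorem cw_free_energy_thermodynamic_limit (β h : ℝ) (hβ : 0 ≤ β) :
    Filter.Tendsto (fun N : ℕ => Real.log (cwZ N β h) / N) Filter.atTop
        (nhds (⨆ M : ℝ, (Real.log 2 + Real.log (Real.cosh (β * (h + M))) - β / 2 * M ^ 2)))
      ∧ (⨅ N : {n : ℕ // 1 ≤ n}, Real.log (cwZ N β h) / N)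
        = ⨆ M : ℝ, (Real.log 2 + Real.log (Real.cosh (β * (h + M))) - β / 2 * M ^ 2) := by
  have hbdd : BddAbove (Set.range fun M : ℝ =>
      Real.log 2 + Real.log (Real.cosh (β * (h + M))) - β / 2 * M ^ 2) := by
    refine ⟨Real.log (cwZ 1 β h) / (1 : ℕ), ?_⟩
    rintro _ ⟨M, rfl⟩
    exact cw_lower 1 le_rfl β h M hβ
  have hS := fun M => le_ciSup hbdd M
  have hlow : ∀ N : ℕ, 1 ≤ N → (⨆ M : ℝ, (Real.log 2 + Real.log (Real.cosh (β * (h + M)))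
      - β / 2 * M ^ 2)) ≤ Real.log (cwZ N β h) / N :=
    fun N hN => ciSup_le fun M => cw_lower N hN β h M hβ
  have hlim : Filter.Tendsto (fun N : ℕ => Real.log (cwZ N β h) / N) Filter.atTop
      (nhds (⨆ M : ℝ, (Real.log 2 + Real.log (Real.cosh (β * (h + M))) - β / 2 * M ^ 2))) := by
    have hup := cw_log_tendsto.add_const
      (⨆ M : ℝ, (Real.log 2 + Real.log (Real.cosh (β * (h + M))) - β / 2 * M ^ 2))
    rw [zero_add] at hup
    refine tendsto_of_tendsto_of_tendsto_of_le_of_le' tendsto_const_nhds hup ?_ ?_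
    · filter_upwards [Filter.eventually_ge_atTop 1] with N hN using hlow N hN
    · filter_upwards [Filter.eventually_ge_atTop 1] with N hN using cw_upper N hN β h _ hS
  refine ⟨hlim, le_antisymm ?_ ?_⟩
  · refine ge_of_tendsto hlim ?_
    filter_upwards [Filter.eventually_ge_atTop 1] with N hN
    refine ciInf_le (f := fun N : {n : ℕ // 1 ≤ n} => Real.log (cwZ N β h) / N) ?_ ⟨N, hN⟩
    refine ⟨⨆ M : ℝ, (Real.log 2 + Real.log (Real.cosh (β * (h + M))) - β / 2 * M ^ 2), ?_⟩
    rintro _ ⟨n, rfl⟩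
    exact hlow n n.2
  · have : Nonempty {n : ℕ // 1 ≤ n} := ⟨⟨1, le_rfl⟩⟩
    exact le_ciInf fun n => hlow n n.2
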